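/- arXiv:1508.02259 — 6 statements merged into one kernel-verified Lean document; each statement's English description precedes it below -/
import Mathlib

section
/- Let U and Y be real Hilbert spaces, H : U → Y a continuous linear map, r ∈ Y and β > 0. For z ∈ Y let J₂(z, u) = (1/2)‖z + H u − r‖² + (β/2)‖u‖². If u₁* minimizes J₂(z₁, ·) over U and u₂* minimizes J₂(z₂, ·) over U, then ‖u₁* − u₂*‖ ≤ (‖H‖/β) ‖z₁ − z₂‖. In particular the follower's best response depends Lipschitz-continuously (hence uniformly) on the leader-induced state, as claimed in Proposition 1. -/
open scoped RealInnerProductSpace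

/-!
Testing the first-order condition of each best response against the other one and adding the two
inequalities cancels the target `r` and leaves
`‖H (u₁ - u₂)‖² + β ‖u₁ - u₂‖² ≤ ⟪z₂ - z₁, H (u₁ - u₂)⟫`.
Dropping the first term, Cauchy–Schwarz bounds `β ‖u₁ - u₂‖²` by `‖z₁ - z₂‖ ‖H‖ ‖u₁ - u₂‖`.
-/

theorem norm_le_opNorm_div_mul_norm_of_mul_norm_sq_le_inner {E F : Type*}
    [SeminormedAddCommGroup E] [NormedSpace ℝ E] [SeminormedAddCommGroup F] [InnerProductSpace ℝ F]
    {T : E →L[ℝ] F} {c : ℝ} {x : E} {y : F} (hc : 0 < c) (h : c * ‖x‖ ^ 2 ≤ ⟪y, T x⟫) :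
    ‖x‖ ≤ ‖T‖ / c * ‖y‖ := by
  have mul_norm_le : c * ‖x‖ * ‖x‖ ≤ ‖T‖ * ‖y‖ * ‖x‖ :=
    calc c * ‖x‖ * ‖x‖ = c * ‖x‖ ^ 2 := by ring
      _ ≤ ⟪y, T x⟫ := h
      _ ≤ ‖y‖ * ‖T x‖ := real_inner_le_norm y (T x)
      _ ≤ ‖y‖ * (‖T‖ * ‖x‖) := by gcongr; exact T.le_opNorm x
      _ = ‖T‖ * ‖y‖ * ‖x‖ := by ring
  rw [div_mul_eq_mul_div, le_div_iff₀' hc]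
  obtain hx | hx := (norm_nonneg x).eq_or_lt'
  · rw [hx, mul_zero]
    positivity
  · exact le_of_mul_le_mul_right mul_norm_le hx

section FollowerCost

variable {U Y : Type*} [NormedAddCommGroup U] [InnerProductSpace ℝ U]
  [NormedAddCommGroup Y] [InnerProductSpace ℝ Y]
  {H : U →L[ℝ] Y} {r z z₁ z₂ : Y} {β : ℝ} {K : Set U} {u v u₁ u₂ : U}

/-- The follower's cost `J₂(z, u)`: the tracking error of the state `z + H u` with respect to the
target `r`, plus the control cost with weight `β`. For a fixed leader-induced state `z`, the
follower minimizes `followerCost H r β z`. -/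
noncomputable def followerCost (H : U →L[ℝ] Y) (r : Y) (β : ℝ) (z : Y) (u : U) : ℝ :=
  (1 / 2) * ‖z + H u - r‖ ^ 2 + (β / 2) * ‖u‖ ^ 2

theorem hasFDerivAt_followerCost (H : U →L[ℝ] Y) (r : Y) (β : ℝ) (z : Y) (u : U) :
    HasFDerivAt (followerCost H r β z)
      ((innerSL ℝ (z + H u - r)).comp H + β • innerSL ℝ u) u := by
  have hasFDerivAt_error : HasFDerivAt (fun x ↦ z + H x - r) H u :=
    (H.hasFDerivAt.const_add z).sub_const r
  refine ((hasFDerivAt_error.norm_sq.const_mul (1 / 2)).add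
    ((hasFDerivAt_id u).norm_sq.const_mul (β / 2))).congr_fderiv ?_
  ext v
  simp only [add_apply, smul_apply, ContinuousLinearMap.comp_apply, ContinuousLinearMap.id_apply,
    coe_innerSL_apply, id_eq, nsmul_eq_mul, Nat.cast_ofNat, smul_eq_mul]
  ring

theorem followerCost_variational_inequality_of_isLocalMinOn
    (hu : IsLocalMinOn (followerCost H r β z) K u) (hK : Convex ℝ K) (huK : u ∈ K) (hvK : v ∈ K) :
    0 ≤ ⟪z + H u - r, H (v - u)⟫ + β * ⟪u, v - u⟫ :=
  hu.hasFDerivWithinAt_nonneg (hasFDerivAt_followerCost H r β z u).hasFDerivWithinAt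
    (sub_mem_posTangentConeAt_of_segment_subset (hK.segment_subset huK hvK))

theorem norm_sq_map_sub_add_mul_norm_sq_sub_le_inner
    (h₁ : 0 ≤ ⟪z₁ + H u₁ - r, H (u₂ - u₁)⟫ + β * ⟪u₁, u₂ - u₁⟫)
    (h₂ : 0 ≤ ⟪z₂ + H u₂ - r, H (u₁ - u₂)⟫ + β * ⟪u₂, u₁ - u₂⟫) :
    ‖H (u₁ - u₂)‖ ^ 2 + β * ‖u₁ - u₂‖ ^ 2 ≤ ⟪z₂ - z₁, H (u₁ - u₂)⟫ := by
  rw [← neg_sub u₁ u₂, map_neg, inner_neg_right, inner_neg_right] at h₁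
  have state_diff : z₂ - z₁ = (z₂ + H u₂ - r) - (z₁ + H u₁ - r) + H (u₁ - u₂) := by
    rw [map_sub]
    abel
  have norm_sq_diff : ‖u₁ - u₂‖ ^ 2 = ⟪u₁, u₁ - u₂⟫ - ⟪u₂, u₁ - u₂⟫ := by
    rw [← inner_sub_left, real_inner_self_eq_norm_sq]
  rw [state_diff, inner_add_left, inner_sub_left, real_inner_self_eq_norm_sq, norm_sq_diff]
  linarith

theorem follower_best_response_lipschitz_general (hβ : 0 < β) (hK : Convex ℝ K)
    (hu₁K : u₁ ∈ K) (hu₂K : u₂ ∈ K)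
    (h₁ : IsLocalMinOn (followerCost H r β z₁) K u₁)
    (h₂ : IsLocalMinOn (followerCost H r β z₂) K u₂) :
    ‖u₁ - u₂‖ ≤ ‖H‖ / β * ‖z₁ - z₂‖ := by
  have energy_le : ‖H (u₁ - u₂)‖ ^ 2 + β * ‖u₁ - u₂‖ ^ 2 ≤ ⟪z₂ - z₁, H (u₁ - u₂)⟫ :=
    norm_sq_map_sub_add_mul_norm_sq_sub_le_inner
      (followerCost_variational_inequality_of_isLocalMinOn h₁ hK hu₁K hu₂K)
      (followerCost_variational_inequality_of_isLocalMinOn h₂ hK hu₂K hu₁K)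
  rw [norm_sub_rev z₁]
  exact norm_le_opNorm_div_mul_norm_of_mul_norm_sq_le_inner hβ
    ((le_add_of_nonneg_left (sq_nonneg _)).trans energy_le)

end FollowerCost

/-- Lipschitz dependence of the follower's best response on the
leader-induced state: if `uᵢ*` minimizes `J₂(zᵢ, ·)` then
`‖u₁* − u₂*‖ ≤ (‖H‖/β) ‖z₁ − z₂‖`. -/
theorem follower_best_response_lipschitz
    {U Y : Type*} [NormedAddCommGroup U] [InnerProductSpace ℝ U] [CompleteSpace U]
    [NormedAddCommGroup Y] [InnerProductSpace ℝ Y] [CompleteSpace Y]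
    (H : U →L[ℝ] Y) (r : Y) (β : ℝ) (hβ : 0 < β)
    (J₂ : Y → U → ℝ)
    (hJ₂ : ∀ (z : Y) (u : U),
      J₂ z u = (1 / 2) * ‖z + H u - r‖ ^ 2 + (β / 2) * ‖u‖ ^ 2)
    (z₁ z₂ : Y) (u₁ u₂ : U)
    (h₁ : ∀ u : U, J₂ z₁ u₁ ≤ J₂ z₁ u)
    (h₂ : ∀ u : U, J₂ z₂ u₂ ≤ J₂ z₂ u) :
    ‖u₁ - u₂‖ ≤ (‖H‖ / β) * ‖z₁ - z₂‖ := by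
  obtain rfl : J₂ = followerCost H r β := funext₂ hJ₂
  exact follower_best_response_lipschitz_general hβ convex_univ (Set.mem_univ u₁) (Set.mem_univ u₂)
    (isMinOn_univ_iff.2 h₁).localize (isMinOn_univ_iff.2 h₂).localize
end

section
/- Let U and Y be real Hilbert spaces, H : U → Y a continuous linear map with Hilbert adjoint H*, g ∈ Y and α > 0. If ξ₀ ∈ Y satisfies the variational inequality ⟨H(H*ξ₀) − g, ξ̂ − ξ₀⟩ + α(‖ξ̂‖ − ‖ξ₀‖) ≥ 0 for all ξ̂ ∈ Y, then ‖H(H*ξ₀) − g‖ ≤ α; that is, the control u₁* = H*ξ₀ steers the terminal state into the target ball, as asserted for (3.14) in Proposition 2. -/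
open scoped RealInnerProductSpace

theorem apply_le_mul_norm_of_forall_apply_sub_add_nonneg
    {E F : Type*} [SeminormedAddCommGroup E] [FunLike F E ℝ] [AddMonoidHomClass F E ℝ]
    {f : F} {α : ℝ} (hα : 0 ≤ α) {x₀ : E}
    (hf : ∀ x, 0 ≤ f (x - x₀) + α * (‖x‖ - ‖x₀‖)) (v : E) :
    f v ≤ α * ‖v‖ := by
  have test_at_sub : 0 ≤ -f v + α * (‖x₀ - v‖ - ‖x₀‖) := by
    simpa only [sub_sub_cancel_left, map_neg] using hf (x₀ - v)
  calc
    f v ≤ α * (‖x₀ - v‖ - ‖x₀‖) := by linarith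
    _ ≤ α * ‖v‖ := by
      gcongr
      exact sub_le_iff_le_add'.mpr (norm_sub_le x₀ v)

theorem opNorm_le_of_forall_apply_sub_add_nonneg
    {E : Type*} [SeminormedAddCommGroup E] [NormedSpace ℝ E]
    {f : StrongDual ℝ E} {α : ℝ} (hα : 0 ≤ α) {x₀ : E}
    (hf : ∀ x, 0 ≤ f (x - x₀) + α * (‖x‖ - ‖x₀‖)) :
    ‖f‖ ≤ α := by
  have apply_le := apply_le_mul_norm_of_forall_apply_sub_add_nonneg hα hf
  refine f.opNorm_le_bound hα fun v ↦ abs_le'.mpr ⟨apply_le v, ?_⟩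
  simpa only [map_neg, norm_neg] using apply_le (-v)

theorem variational_inequality_implies_feasible_general
    {Y : Type*} [SeminormedAddCommGroup Y] [InnerProductSpace ℝ Y]
    {y g ξ₀ : Y} {α : ℝ} (hα : 0 ≤ α)
    (hVI : ∀ ξ : Y, 0 ≤ ⟪y - g, ξ - ξ₀⟫ + α * (‖ξ‖ - ‖ξ₀‖)) :
    ‖y - g‖ ≤ α := by
  rw [← innerSL_apply_norm ℝ (y - g)]
  exact opNorm_le_of_forall_apply_sub_add_nonneg hα hVI

/-- If `ξ₀` satisfies the variational inequality (3.16), then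
`‖H(H*ξ₀) − g‖ ≤ α`, i.e. the control `u₁* = H*ξ₀` steers the terminal state
into the target ball (Proposition 2, (3.14)). -/
theorem variational_inequality_implies_feasible
    {U Y : Type*} [NormedAddCommGroup U] [InnerProductSpace ℝ U] [CompleteSpace U]
    [NormedAddCommGroup Y] [InnerProductSpace ℝ Y] [CompleteSpace Y]
    (H : U →L[ℝ] Y) (g : Y) (α : ℝ) (hα : 0 < α)
    (ξ₀ : Y)
    (hVI : ∀ ξhat : Y,
      ⟪H ((ContinuousLinearMap.adjoint H) ξ₀) - g, ξhat - ξ₀⟫ +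
        α * (‖ξhat‖ - ‖ξ₀‖) ≥ 0) :
    ‖H ((ContinuousLinearMap.adjoint H) ξ₀) - g‖ ≤ α :=
  variational_inequality_implies_feasible_general hα.le hVI
end

section
/- Let U and Y be real Hilbert spaces, H : U → Y a continuous linear map with Hilbert adjoint H*, g ∈ Y and α > 0. If ξ₀ ∈ Y satisfies the variational inequality ⟨H(H*ξ₀) − g, ξ̂ − ξ₀⟩ + α(‖ξ̂‖ − ‖ξ₀‖) ≥ 0 for all ξ̂ ∈ Y, then u₁* = H*ξ₀ is an optimal feasible control: ‖H u₁* − g‖ ≤ α, and for every u ∈ U with ‖H u − g‖ ≤ α one has ‖H*ξ₀‖ ≤ ‖u‖. (This is the abstract content of Proposition 2: the leader's optimal strategy is u₁* = φ(ξ)χ_{U₁} = H*ξ where ξ solves the variational inequality (3.16).) -/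
open scoped RealInnerProductSpace

/-!
The variational inequality says that `g - H (H* ξ₀)` is a subgradient of `α ‖·‖` at `ξ₀`, so the
residual `r = H (H* ξ₀) - g` satisfies `‖r‖ ≤ α` and `⟪r, ξ₀⟫ = -α ‖ξ₀‖`. By Cauchy–Schwarz
`-α ‖ξ₀‖ ≤ ⟪H u - g, ξ₀⟫` for every feasible `u`, so `H* ξ₀` minimizes `⟪H u, ξ₀⟫ = ⟪u, H* ξ₀⟫`
over the feasible controls; hence `‖H* ξ₀‖ ^ 2 ≤ ⟪u, H* ξ₀⟫ ≤ ‖u‖ ‖H* ξ₀‖`.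
-/

theorem le_of_mul_self_le_mul {R : Type*} [Semiring R] [LinearOrder R] [IsStrictOrderedRing R]
    {a b : R} (hb : 0 ≤ b) (h : a * a ≤ b * a) : a ≤ b := by
  rcases le_or_gt a 0 with ha | ha
  · exact ha.trans hb
  · exact le_of_mul_le_mul_right h ha

section InnerProduct

variable {E : Type*} [SeminormedAddCommGroup E] [InnerProductSpace ℝ E]

theorem norm_le_norm_of_inner_self_le {x y : E} (h : ⟪x, x⟫ ≤ ⟪y, x⟫) : ‖x‖ ≤ ‖y‖ := by
  have hmul : ‖x‖ * ‖x‖ ≤ ‖y‖ * ‖x‖ :=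
    calc ‖x‖ * ‖x‖ = ⟪x, x⟫ := (real_inner_self_eq_norm_mul_norm x).symm
      _ ≤ ⟪y, x⟫ := h
      _ ≤ ‖y‖ * ‖x‖ := real_inner_le_norm y x
  exact le_of_mul_self_le_mul (norm_nonneg y) hmul

theorem neg_mul_norm_le_inner_of_norm_le {r : E} {α : ℝ} (hr : ‖r‖ ≤ α) (x : E) :
    -(α * ‖x‖) ≤ ⟪r, x⟫ :=
  calc -(α * ‖x‖) ≤ -(‖r‖ * ‖x‖) := by gcongr
    _ ≤ ⟪r, x⟫ := neg_le_of_abs_le (abs_real_inner_le_norm r x)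

/-- The variational inequality of the functional `x ↦ ⟪r, x⟫ + α ‖x‖` at the point `x₀`; it says
that `-r` is a subgradient of `α ‖·‖` at `x₀`. In the dual optimality condition `r` is the residual
`H (H* ξ₀) - g` and `x₀` is `ξ₀`. -/
def NormVariationalInequality (α : ℝ) (r x₀ : E) : Prop :=
  ∀ x : E, 0 ≤ ⟪r, x - x₀⟫ + α * (‖x‖ - ‖x₀‖)

namespace NormVariationalInequality

variable {α : ℝ} {r x₀ : E}

theorem neg_mul_norm_le_inner (hα : 0 ≤ α) (h : NormVariationalInequality α r x₀) (v : E) :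
    -(α * ‖v‖) ≤ ⟪r, v⟫ := by
  have htranslate : 0 ≤ ⟪r, v⟫ + α * (‖x₀ + v‖ - ‖x₀‖) := by
    simpa only [add_sub_cancel_left] using h (x₀ + v)
  have htriangle : α * (‖x₀ + v‖ - ‖x₀‖) ≤ α * ‖v‖ :=
    mul_le_mul_of_nonneg_left (sub_le_iff_le_add'.2 (norm_add_le x₀ v)) hα
  linarith

theorem norm_le (hα : 0 ≤ α) (h : NormVariationalInequality α r x₀) : ‖r‖ ≤ α := by
  have hmul : ‖r‖ * ‖r‖ ≤ α * ‖r‖ := by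
    simpa only [norm_neg, inner_neg_right, neg_le_neg_iff, real_inner_self_eq_norm_mul_norm]
      using h.neg_mul_norm_le_inner hα (-r)
  exact le_of_mul_self_le_mul hα hmul

theorem inner_le_neg_mul_norm (h : NormVariationalInequality α r x₀) :
    ⟪r, x₀⟫ ≤ -(α * ‖x₀‖) := by
  have hzero : 0 ≤ -⟪r, x₀⟫ + α * -‖x₀‖ := by
    simpa only [zero_sub, inner_neg_right, norm_zero] using h 0
  linarith

end NormVariationalInequality

end InnerProduct

theorem variational_inequality_gives_optimal_control_general
    {U Y : Type*} [SeminormedAddCommGroup U] [InnerProductSpace ℝ U]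
    [SeminormedAddCommGroup Y] [InnerProductSpace ℝ Y]
    {H : U → Y} {g ξ₀ : Y} {w : U} {α : ℝ} (hα : 0 ≤ α)
    (hw : ∀ u : U, ⟪H u, ξ₀⟫ = ⟪u, w⟫)
    (hVI : NormVariationalInequality α (H w - g) ξ₀) :
    ‖H w - g‖ ≤ α ∧ ∀ u : U, ‖H u - g‖ ≤ α → ‖w‖ ≤ ‖u‖ := by
  refine ⟨hVI.norm_le hα, fun u hu ↦ norm_le_norm_of_inner_self_le ?_⟩
  have hresidual : ⟪H w - g, ξ₀⟫ ≤ ⟪H u - g, ξ₀⟫ :=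
    hVI.inner_le_neg_mul_norm.trans (neg_mul_norm_le_inner_of_norm_le hu ξ₀)
  simpa only [inner_sub_left, sub_le_sub_iff_right, hw] using hresidual

/-- If `ξ₀` satisfies the variational inequality (3.16), then
`u₁* = H*ξ₀` is an optimal feasible control: `‖H u₁* − g‖ ≤ α` and
`‖H*ξ₀‖ ≤ ‖u‖` for every feasible `u` (Proposition 2). -/
theorem variational_inequality_gives_optimal_control
    {U Y : Type*} [NormedAddCommGroup U] [InnerProductSpace ℝ U] [CompleteSpace U]
    [NormedAddCommGroup Y] [InnerProductSpace ℝ Y] [CompleteSpace Y]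
    (H : U →L[ℝ] Y) (g : Y) (α : ℝ) (hα : 0 < α)
    (ξ₀ : Y)
    (hVI : ∀ ξhat : Y,
      ⟪H ((ContinuousLinearMap.adjoint H) ξ₀) - g, ξhat - ξ₀⟫ +
        α * (‖ξhat‖ - ‖ξ₀‖) ≥ 0) :
    ‖H ((ContinuousLinearMap.adjoint H) ξ₀) - g‖ ≤ α ∧
      ∀ u : U, ‖H u - g‖ ≤ α → ‖(ContinuousLinearMap.adjoint H) ξ₀‖ ≤ ‖u‖ :=
  variational_inequality_gives_optimal_control_general hα.le
    (fun u ↦ (H.adjoint_inner_right u ξ₀).symm) hVI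
end

section
/- Let U and Y be real Hilbert spaces, H : U → Y a continuous linear map with Hilbert adjoint H*, g ∈ Y and α > 0. If ξ₀ ∈ Y satisfies the variational inequality ⟨H(H*ξ₀) − g, ξ̂ − ξ₀⟩ + α(‖ξ̂‖ − ‖ξ₀‖) ≥ 0 for all ξ̂ ∈ Y, then the extremality identity ‖H*ξ₀‖² + α‖ξ₀‖ = ⟨ξ₀, g⟩ holds. -/
open scoped RealInnerProductSpace

/-!
The variational inequality says that `ξ₀` minimizes `ξ ↦ ⟪H (H* ξ₀) - g, ξ⟫ + α ‖ξ‖`. This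
functional is positively homogeneous, hence linear along the ray through `ξ₀`, and a linear function
on `[0, ∞)` with an interior minimum vanishes (compare `t = 1` with `t = 0` and `t = 2`). So its
value at `ξ₀` is `0`, which is the extremality identity because `⟪H (H* ξ₀), ξ₀⟫ = ‖H* ξ₀‖²`.
-/

section PositivelyHomogeneous

variable {R E : Type*} [Ring R] [PartialOrder R] [IsOrderedRing R]

theorem eq_zero_of_forall_le_of_pos_homogeneous [SMul R E] {φ : E → R} {x₀ : E}
    (hmin : ∀ x, φ x₀ ≤ φ x) (hφ : ∀ t : R, 0 ≤ t → φ (t • x₀) = t * φ x₀) : φ x₀ = 0 := by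
  have le_zero : φ x₀ ≤ 0 :=
    calc φ x₀ ≤ φ ((0 : R) • x₀) := hmin _
      _ = 0 := by rw [hφ 0 le_rfl, zero_mul]
  have le_double : φ x₀ ≤ φ x₀ + φ x₀ :=
    calc φ x₀ ≤ φ ((2 : R) • x₀) := hmin _
      _ = φ x₀ + φ x₀ := by rw [hφ 2 zero_le_two, two_mul]
  exact le_antisymm le_zero ((le_add_iff_nonneg_left _).mp le_double)

theorem linear_add_pos_homogeneous_eq_zero_of_variational_inequality
    [AddCommGroup E] [Module R E] {ℓ : E →ₗ[R] R} {p : E → R} {x₀ : E}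
    (hp : ∀ t : R, 0 ≤ t → p (t • x₀) = t * p x₀)
    (hVI : ∀ x, 0 ≤ ℓ (x - x₀) + (p x - p x₀)) : ℓ x₀ + p x₀ = 0 := by
  refine eq_zero_of_forall_le_of_pos_homogeneous (R := R) (φ := fun x ↦ ℓ x + p x)
    (fun x ↦ ?_) (fun t ht ↦ ?_)
  · rw [← sub_nonneg, add_sub_add_comm, ← map_sub]
    exact hVI x
  · rw [map_smul, smul_eq_mul, hp t ht, mul_add]

end PositivelyHomogeneous

theorem variational_inequality_extremality_identity_general
    {U Y : Type*} [SeminormedAddCommGroup U] [InnerProductSpace ℝ U]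
    [SeminormedAddCommGroup Y] [InnerProductSpace ℝ Y]
    {H : U → Y} {Hadj : Y → U} (hadj : LinearMap.IsAdjointPair (innerₗ U) (innerₗ Y) H Hadj)
    {g : Y} {α : ℝ} {ξ₀ : Y}
    (hVI : ∀ ξ : Y, 0 ≤ ⟪H (Hadj ξ₀) - g, ξ - ξ₀⟫ + α * (‖ξ‖ - ‖ξ₀‖)) :
    ‖Hadj ξ₀‖ ^ 2 + α * ‖ξ₀‖ = ⟪ξ₀, g⟫ := by
  have norm_homogeneous (t : ℝ) (ht : 0 ≤ t) : α * ‖t • ξ₀‖ = t * (α * ‖ξ₀‖) := by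
    rw [norm_smul_of_nonneg ht, mul_left_comm]
  have value_eq_zero : ⟪H (Hadj ξ₀) - g, ξ₀⟫ + α * ‖ξ₀‖ = 0 :=
    linear_add_pos_homogeneous_eq_zero_of_variational_inequality (R := ℝ)
      (ℓ := innerₗ Y (H (Hadj ξ₀) - g)) (p := fun ξ ↦ α * ‖ξ‖) norm_homogeneous
      fun ξ ↦ by simpa only [innerₗ_apply_apply, mul_sub] using hVI ξ
  have inner_eq_norm_sq : ⟪H (Hadj ξ₀), ξ₀⟫ = ‖Hadj ξ₀‖ ^ 2 :=
    (hadj (Hadj ξ₀) ξ₀).trans (real_inner_self_eq_norm_sq _)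
  rw [inner_sub_left, inner_eq_norm_sq, real_inner_comm] at value_eq_zero
  linarith

/-- If `ξ₀` satisfies the variational inequality (3.16), then the
extremality identity `‖H*ξ₀‖² + α‖ξ₀‖ = ⟪ξ₀, g⟫` holds. -/
theorem variational_inequality_extremality_identity
    {U Y : Type*} [NormedAddCommGroup U] [InnerProductSpace ℝ U] [CompleteSpace U]
    [NormedAddCommGroup Y] [InnerProductSpace ℝ Y] [CompleteSpace Y]
    (H : U →L[ℝ] Y) (g : Y) (α : ℝ) (hα : 0 < α)
    (ξ₀ : Y)
    (hVI : ∀ ξhat : Y,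
      ⟪H ((ContinuousLinearMap.adjoint H) ξ₀) - g, ξhat - ξ₀⟫ +
        α * (‖ξhat‖ - ‖ξ₀‖) ≥ 0) :
    ‖(ContinuousLinearMap.adjoint H) ξ₀‖ ^ 2 + α * ‖ξ₀‖ = ⟪ξ₀, g⟫ := by
  exact variational_inequality_extremality_identity_general
    (fun u ξ ↦ (H.adjoint_inner_right u ξ).symm) hVI
end

section
/- Let U and Y be real Hilbert spaces, H : U → Y a continuous linear map with Hilbert adjoint H*, g ∈ Y and α > 0. If ξ₀ ∈ Y satisfies the variational inequality ⟨H(H*ξ₀) − g, ξ̂ − ξ₀⟩ + α(‖ξ̂‖ − ‖ξ₀‖) ≥ 0 for all ξ̂ ∈ Y, then strong duality holds with attainment: the infimum of (1/2)‖u‖² over all u ∈ U with ‖H u − g‖ ≤ α equals (1/2)‖H*ξ₀‖², and it equals −F(ξ₀) where F(ξ) = (1/2)‖H*ξ‖² + α‖ξ‖ − ⟨ξ, g⟩. (This is the abstract form of the Fenchel duality identity (3.21) used in the proof of Proposition 2.) -/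
open scoped RealInnerProductSpace

/-!
The variational inequality says that `g - H (H* ξ₀)` is a subgradient of `α‖·‖` at `ξ₀`, that is,
`‖H (H* ξ₀) - g‖ ≤ α` and `⟪H (H* ξ₀) - g, ξ₀⟫ = -α‖ξ₀‖`. The first relation makes `H* ξ₀` feasible;
the second turns `⟪H (H* ξ₀), ξ₀⟫ = ‖H* ξ₀‖²` into `½‖H* ξ₀‖² = -F ξ₀`. Weak duality, Cauchy–Schwarz
followed by Young's inequality, bounds the cost of every feasible control below by `-F ξ₀`.
-/

section NormVariationalInequality

variable {E : Type*} [NormedAddCommGroup E] [InnerProductSpace ℝ E] {r ξ : E} {α : ℝ}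

theorem inner_eq_neg_mul_norm_of_variational_inequality
    (hVI : ∀ x : E, 0 ≤ ⟪r, x - ξ⟫ + α * (‖x‖ - ‖ξ‖)) : ⟪r, ξ⟫ = -(α * ‖ξ‖) := by
  have at_zero : 0 ≤ -⟪r, ξ⟫ - α * ‖ξ‖ := by
    simpa [sub_eq_add_neg] using hVI 0
  have at_double : 0 ≤ ⟪r, ξ⟫ + α * ‖ξ‖ := by
    have norm_double : ‖ξ + ξ‖ = ‖ξ‖ + ‖ξ‖ := by
      rw [← two_smul ℝ, norm_smul, Real.norm_two, two_mul]
    simpa [norm_double] using hVI (ξ + ξ)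
  linarith

theorem norm_le_of_variational_inequality (hα : 0 ≤ α)
    (hVI : ∀ x : E, 0 ≤ ⟪r, x - ξ⟫ + α * (‖x‖ - ‖ξ‖)) : ‖r‖ ≤ α := by
  have at_neg_self := hVI (-r)
  rw [inner_sub_right, inner_neg_right, real_inner_self_eq_norm_sq, norm_neg,
    inner_eq_neg_mul_norm_of_variational_inequality hVI] at at_neg_self
  have sq_le : ‖r‖ * ‖r‖ ≤ α * ‖r‖ := by linarith
  rcases (norm_nonneg r).eq_or_lt with hr | hr
  · exact hr ▸ hα
  · exact le_of_mul_le_mul_right sq_le hr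

end NormVariationalInequality

section WeakDuality

variable {E : Type*} [NormedAddCommGroup E] [InnerProductSpace ℝ E]

theorem inner_sub_mul_norm_le_inner_of_norm_sub_le {y g : E} {α : ℝ} (hy : ‖y - g‖ ≤ α) (ξ : E) :
    ⟪ξ, g⟫ - α * ‖ξ‖ ≤ ⟪y, ξ⟫ := by
  have cauchy_schwarz : ⟪g - y, ξ⟫ ≤ α * ‖ξ‖ :=
    calc ⟪g - y, ξ⟫ ≤ ‖g - y‖ * ‖ξ‖ := real_inner_le_norm _ _
      _ ≤ α * ‖ξ‖ := by rw [norm_sub_rev]; gcongr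
  rw [inner_sub_left, real_inner_comm] at cauchy_schwarz
  linarith

theorem real_inner_le_half_norm_sq_add_half_norm_sq (u v : E) :
    ⟪u, v⟫ ≤ 1 / 2 * ‖u‖ ^ 2 + 1 / 2 * ‖v‖ ^ 2 := by
  linarith [norm_sub_sq_real u v, sq_nonneg ‖u - v‖]

end WeakDuality

/-- The vector `v` representing `u ↦ ⟪H u, ξ₀⟫` plays the role of `H* ξ₀`. -/
theorem leader_strong_duality_general
    {U Y : Type*} [NormedAddCommGroup U] [InnerProductSpace ℝ U]
    [NormedAddCommGroup Y] [InnerProductSpace ℝ Y]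
    {H : U → Y} {g ξ₀ : Y} {v : U} {α : ℝ} (hα : 0 ≤ α)
    (hv : ∀ u : U, ⟪H u, ξ₀⟫ = ⟪u, v⟫)
    (hVI : ∀ ξ : Y, 0 ≤ ⟪H v - g, ξ - ξ₀⟫ + α * (‖ξ‖ - ‖ξ₀‖)) :
    IsLeast ((fun u : U => (1 / 2) * ‖u‖ ^ 2) '' {u : U | ‖H u - g‖ ≤ α}) ((1 / 2) * ‖v‖ ^ 2) ∧
      (1 / 2) * ‖v‖ ^ 2 = -((1 / 2) * ‖v‖ ^ 2 + α * ‖ξ₀‖ - ⟪ξ₀, g⟫) := by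
  have feasible : ‖H v - g‖ ≤ α := norm_le_of_variational_inequality hα hVI
  have norm_sq_eq : ‖v‖ ^ 2 = ⟪ξ₀, g⟫ - α * ‖ξ₀‖ := by
    have slackness := inner_eq_neg_mul_norm_of_variational_inequality hVI
    rw [inner_sub_left, hv, real_inner_self_eq_norm_sq, real_inner_comm] at slackness
    linarith
  refine ⟨⟨⟨v, feasible, rfl⟩, ?_⟩, by linarith⟩
  rintro _ ⟨u, hu, rfl⟩
  have weak_duality : ⟪ξ₀, g⟫ - α * ‖ξ₀‖ ≤ 1 / 2 * ‖u‖ ^ 2 + 1 / 2 * ‖v‖ ^ 2 :=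
    calc ⟪ξ₀, g⟫ - α * ‖ξ₀‖ ≤ ⟪H u, ξ₀⟫ := inner_sub_mul_norm_le_inner_of_norm_sub_le hu ξ₀
      _ = ⟪u, v⟫ := hv u
      _ ≤ 1 / 2 * ‖u‖ ^ 2 + 1 / 2 * ‖v‖ ^ 2 := real_inner_le_half_norm_sq_add_half_norm_sq u v
  linarith

/-- Strong duality with attainment: if `ξ₀` satisfies the
variational inequality (3.16), then the infimum of `(1/2)‖u‖²` over feasible
controls equals `(1/2)‖H*ξ₀‖²` (and it is attained), and this value equals
`−F(ξ₀)` (the Fenchel duality identity (3.21)). -/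
theorem leader_strong_duality
    {U Y : Type*} [NormedAddCommGroup U] [InnerProductSpace ℝ U] [CompleteSpace U]
    [NormedAddCommGroup Y] [InnerProductSpace ℝ Y] [CompleteSpace Y]
    (H : U →L[ℝ] Y) (g : Y) (α : ℝ) (hα : 0 < α)
    (F : Y → ℝ)
    (hF : ∀ ξ : Y,
      F ξ = (1 / 2) * ‖(ContinuousLinearMap.adjoint H) ξ‖ ^ 2 + α * ‖ξ‖ - ⟪ξ, g⟫)
    (ξ₀ : Y)
    (hVI : ∀ ξhat : Y,
      ⟪H ((ContinuousLinearMap.adjoint H) ξ₀) - g, ξhat - ξ₀⟫ +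
        α * (‖ξhat‖ - ‖ξ₀‖) ≥ 0) :
    IsLeast ((fun u : U => (1 / 2) * ‖u‖ ^ 2) '' {u : U | ‖H u - g‖ ≤ α})
        ((1 / 2) * ‖(ContinuousLinearMap.adjoint H) ξ₀‖ ^ 2) ∧
      (1 / 2) * ‖(ContinuousLinearMap.adjoint H) ξ₀‖ ^ 2 = -F ξ₀ := by
  rw [hF]
  exact leader_strong_duality_general hα.le (fun u => (H.adjoint_inner_right u ξ₀).symm) hVI
end

section
/- Let U and Y be real Hilbert spaces, H : U → Y a continuous linear map with Hilbert adjoint H*, g ∈ Y and α > 0, and F(ξ) = (1/2)‖H*ξ‖² + α‖ξ‖ − ⟨ξ, g⟩. If there exists a strictly feasible control, i.e., some u ∈ U with ‖H u − g‖ < α, then F attains its infimum over Y: there exists ξ₀ ∈ Y with F(ξ₀) ≤ F(ξ) for all ξ ∈ Y. (Existence of the dual variable ξ solving the variational inequality (3.16) in Proposition 2.) -/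
open scoped RealInnerProductSpace

/-!
The functional `F` is convex and continuous, hence weakly lower semicontinuous, and bounded closed
convex subsets of a Hilbert space are weakly compact; so `F` attains its infimum as soon as its
sublevel sets are bounded. This is where a strictly feasible `u` enters: by Young's inequality
`⟪ξ, H u⟫ = ⟪H* ξ, u⟫ ≤ ‖H* ξ‖² / 2 + ‖u‖² / 2`, so
`F ξ ≥ α ‖ξ‖ + ⟪ξ, H u - g⟫ - ‖u‖² / 2 ≥ (α - ‖H u - g‖) ‖ξ‖ - ‖u‖² / 2`.
-/

open Set Bornology NormedSpace

section WeakTopology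

variable {E : Type*} [AddCommGroup E] [Module ℝ E] [TopologicalSpace E] [IsTopologicalAddGroup E]
  [ContinuousSMul ℝ E] [LocallyConvexSpace ℝ E]

theorem isClosed_toWeakSpace_image {s : Set E} (hs : IsClosed s) (hconv : Convex ℝ s) :
    IsClosed (toWeakSpace ℝ E '' s) := by
  rw [← hs.closure_eq, hconv.toWeakSpace_closure ℝ]
  exact isClosed_closure

theorem lowerSemicontinuous_comp_toWeakSpace_symm {β : Type*} [LinearOrder β] {f : E → β}
    (hf : LowerSemicontinuous f) (hconv : QuasiconvexOn ℝ univ f) :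
    LowerSemicontinuous (f ∘ (toWeakSpace ℝ E).symm) := by
  refine lowerSemicontinuous_iff_isClosed_preimage.mpr fun c ↦ ?_
  rw [preimage_comp, ← LinearEquiv.image_eq_preimage_symm]
  have sublevel_convex : Convex ℝ {x | f x ≤ c} := by
    simpa only [mem_univ, true_and] using hconv c
  exact isClosed_toWeakSpace_image (hf.isClosed_preimage c) sublevel_convex

end WeakTopology

section Reflexive

variable {E : Type*} [NormedAddCommGroup E] [NormedSpace ℝ E]

theorem isCompact_toWeakSpace_image
    (hE : Function.Surjective (inclusionInDoubleDual ℝ E)) {s : Set E} (hs : IsClosed s)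
    (hconv : Convex ℝ s) (hbdd : IsBounded s) : IsCompact (toWeakSpace ℝ E '' s) := by
  rw [← (isClosed_toWeakSpace_image hs hconv).closure_eq]
  refine isCompact_closure_of_isBounded ℝ E _ ?_ fun φ _ ↦ hE φ
  rwa [preimage_image_eq s (toWeakSpace ℝ E).injective]

theorem exists_forall_le_of_quasiconvexOn_of_isBounded {β : Type*} [LinearOrder β]
    (hE : Function.Surjective (inclusionInDoubleDual ℝ E)) {f : E → β}
    (hf : LowerSemicontinuous f) (hconv : QuasiconvexOn ℝ univ f) (x₀ : E)
    (hbdd : IsBounded {x | f x ≤ f x₀}) : ∃ x, ∀ y, f x ≤ f y := by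
  have sublevel_convex : Convex ℝ {x | f x ≤ f x₀} := by
    simpa only [mem_univ, true_and] using hconv (f x₀)
  have sublevel_compact : IsCompact (toWeakSpace ℝ E '' {x | f x ≤ f x₀}) :=
    isCompact_toWeakSpace_image hE (hf.isClosed_preimage (f x₀)) sublevel_convex hbdd
  obtain ⟨_, ⟨x, hx, rfl⟩, hmin⟩ := LowerSemicontinuousOn.exists_isMinOn
    (Nonempty.image _ ⟨x₀, le_refl (f x₀)⟩) sublevel_compact
    ((lowerSemicontinuous_comp_toWeakSpace_symm hf hconv).lowerSemicontinuousOn _)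
  refine ⟨x, fun y ↦ ?_⟩
  rcases le_total (f y) (f x₀) with hy | hy
  · exact hmin (mem_image_of_mem _ hy)
  · exact hx.trans hy

end Reflexive

theorem surjective_inclusionInDoubleDual (𝕜 E : Type*) [RCLike 𝕜] [NormedAddCommGroup E]
    [InnerProductSpace 𝕜 E] [CompleteSpace E] :
    Function.Surjective (inclusionInDoubleDual 𝕜 E) := by
  intro Φ
  -- The Riesz map is conjugate linear, so `y ↦ conj (Φ ⟪y, ·⟫)` is linear and has a representative.
  let ψ : StrongDual 𝕜 E := (starL 𝕜 : 𝕜 ≃L⋆[𝕜] 𝕜).toContinuousLinearMap.comp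
    (Φ.comp (InnerProductSpace.toDual 𝕜 E).toContinuousLinearEquiv.toContinuousLinearMap)
  refine ⟨(InnerProductSpace.toDual 𝕜 E).symm ψ, ContinuousLinearMap.ext fun φ ↦ ?_⟩
  obtain ⟨y, rfl⟩ := (InnerProductSpace.toDual 𝕜 E).surjective φ
  rw [dual_def, InnerProductSpace.toDual_apply_apply, ← inner_conj_symm,
    InnerProductSpace.toDual_symm_apply]
  exact star_star (Φ (InnerProductSpace.toDual 𝕜 E y))

theorem real_inner_le_half_norm_sq_add_half_norm_sq_s14 {E : Type*} [SeminormedAddCommGroup E]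
    [InnerProductSpace ℝ E] (x y : E) : ⟪x, y⟫ ≤ 1 / 2 * ‖x‖ ^ 2 + 1 / 2 * ‖y‖ ^ 2 := by
  linarith [norm_sub_sq_real x y, sq_nonneg ‖x - y‖]

section DualFunctional

variable {U Y : Type*} [NormedAddCommGroup U] [InnerProductSpace ℝ U] [CompleteSpace U]
  [NormedAddCommGroup Y] [InnerProductSpace ℝ Y] [CompleteSpace Y]

/-- The Fenchel dual functional of the problem of minimizing `‖u‖² / 2` over the controls `u` with
`‖H u - g‖ ≤ α`, with the sign for which the dual problem is a minimization. -/
noncomputable def dualFunctional (H : U →L[ℝ] Y) (g : Y) (α : ℝ) (ξ : Y) : ℝ :=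
  (1 / 2) * ‖(ContinuousLinearMap.adjoint H) ξ‖ ^ 2 + α * ‖ξ‖ - ⟪ξ, g⟫

variable (H : U →L[ℝ] Y) (g : Y) {α : ℝ}

theorem continuous_dualFunctional (α : ℝ) : Continuous (dualFunctional H g α) := by
  unfold dualFunctional
  fun_prop

theorem convexOn_dualFunctional (hα : 0 ≤ α) : ConvexOn ℝ univ (dualFunctional H g α) := by
  have quadratic : ConvexOn ℝ univ fun ξ ↦ ‖(ContinuousLinearMap.adjoint H) ξ‖ ^ 2 :=
    (convexOn_univ_norm.pow (fun _ _ ↦ norm_nonneg _) 2).comp_linearMap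
      (ContinuousLinearMap.adjoint H).toLinearMap
  have linear : ConcaveOn ℝ univ fun ξ : Y ↦ ⟪ξ, g⟫ :=
    ((innerₗ Y).flip g).concaveOn convex_univ
  exact ((quadratic.smul (by norm_num)).add (convexOn_univ_norm.smul hα)).sub linear

variable {H g}

theorem mul_norm_sub_half_norm_sq_le_dualFunctional (u : U) (ξ : Y) :
    (α - ‖H u - g‖) * ‖ξ‖ - 1 / 2 * ‖u‖ ^ 2 ≤ dualFunctional H g α ξ := by
  have young : ⟪ξ, H u⟫ ≤
      1 / 2 * ‖(ContinuousLinearMap.adjoint H) ξ‖ ^ 2 + 1 / 2 * ‖u‖ ^ 2 := by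
    rw [← ContinuousLinearMap.adjoint_inner_left]
    exact real_inner_le_half_norm_sq_add_half_norm_sq_s14 _ _
  have residual : -(‖ξ‖ * ‖H u - g‖) ≤ ⟪ξ, H u⟫ - ⟪ξ, g⟫ := by
    rw [← inner_sub_right]
    exact neg_le_of_abs_le (abs_real_inner_le_norm _ _)
  unfold dualFunctional
  linarith

theorem isBounded_setOf_dualFunctional_le {u : U} (hu : ‖H u - g‖ < α) (c : ℝ) :
    IsBounded {ξ | dualFunctional H g α ξ ≤ c} := by
  refine isBounded_iff_forall_norm_le.mpr
    ⟨(c + 1 / 2 * ‖u‖ ^ 2) / (α - ‖H u - g‖), fun ξ (hξ : _ ≤ c) ↦ ?_⟩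
  rw [le_div_iff₀' (sub_pos.mpr hu), ← sub_le_iff_le_add]
  exact (mul_norm_sub_half_norm_sq_le_dualFunctional u ξ).trans hξ

end DualFunctional

/-- If there is a strictly feasible control (`‖H u − g‖ < α`),
then the leader's dual functional `F` attains its infimum over `Y`
(existence of the dual variable `ξ` solving (3.16) in Proposition 2). -/
theorem dual_functional_attains_infimum
    {U Y : Type*} [NormedAddCommGroup U] [InnerProductSpace ℝ U] [CompleteSpace U]
    [NormedAddCommGroup Y] [InnerProductSpace ℝ Y] [CompleteSpace Y]
    (H : U →L[ℝ] Y) (g : Y) (α : ℝ) (hα : 0 < α)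
    (F : Y → ℝ)
    (hF : ∀ ξ : Y,
      F ξ = (1 / 2) * ‖(ContinuousLinearMap.adjoint H) ξ‖ ^ 2 + α * ‖ξ‖ - ⟪ξ, g⟫)
    (hfeas : ∃ u : U, ‖H u - g‖ < α) :
    ∃ ξ₀ : Y, ∀ ξ : Y, F ξ₀ ≤ F ξ := by
  obtain rfl : F = dualFunctional H g α := funext hF
  obtain ⟨u, hu⟩ := hfeas
  exact exists_forall_le_of_quasiconvexOn_of_isBounded (surjective_inclusionInDoubleDual ℝ Y)
    (continuous_dualFunctional H g α).lowerSemicontinuous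
    (convexOn_dualFunctional H g hα.le).quasiconvexOn 0 (isBounded_setOf_dualFunctional_le hu _)
end
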